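/- Let R : P₂ → ℝ be Lebesgue measurable, satisfying the 6-term equation almost everywhere and the symmetry equation almost everywhere, let C ∈ ℝ, and let L : (0,1) → ℝ be Lebesgue measurable and solve the perturbed Spence-Abel system almost everywhere with data (R, C). Then L is essentially bounded on (0,1) if and only if R is essentially bounded on P₂. -/

import Mathlib

open MeasureTheory Set

/-- The parameter space `P₂ = {(x,y) : 0 < x < y < 1}`. -/
def P2 : Set (ℝ × ℝ) := {p | 0 < p.1 ∧ p.1 < p.2 ∧ p.2 < 1}

/-- The parameter space `P₃ = {(x,y,z) : 0 < x < y < z < 1}`. -/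
def P3 : Set (ℝ × ℝ × ℝ) := {p | 0 < p.1 ∧ p.1 < p.2.1 ∧ p.2.1 < p.2.2 ∧ p.2.2 < 1}

/-- `L` solves the perturbed Spence–Abel system almost everywhere with data `(R, C)`. -/
def SolvesAE (R : ℝ × ℝ → ℝ) (C : ℝ) (L : ℝ → ℝ) : Prop :=
  (∀ᵐ p ∂(volume.restrict P2),
    L p.1 - L p.2 - L (p.1 / p.2) - L ((p.2 - 1) / (p.1 - 1))
      + L (p.1 * (p.2 - 1) / (p.2 * (p.1 - 1))) = R p) ∧
  (∀ᵐ x ∂(volume.restrict (Set.Ioo (0:ℝ) 1)), L (1 - x) = C - L x)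

/-- `R` satisfies the 6-term equation almost everywhere on `P₃`. -/
def SixTermAE (R : ℝ × ℝ → ℝ) : Prop :=
  ∀ᵐ p ∂(volume.restrict P3),
    R (p.1, p.2.1) - R (p.1, p.2.2) + R (p.2.1, p.2.2)
      - R (p.1 / p.2.2, p.2.1 / p.2.2)
      - R ((p.2.2 - 1) / (p.1 - 1), (p.2.2 - 1) / (p.2.1 - 1))
      + R (p.1 * (p.2.2 - 1) / (p.2.2 * (p.1 - 1)),
           p.2.1 * (p.2.2 - 1) / (p.2.2 * (p.2.1 - 1))) = 0

/-- `R` satisfies the symmetry equation almost everywhere on `P₂`. -/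
def SymmAE (R : ℝ × ℝ → ℝ) : Prop :=
  ∀ᵐ p ∂(volume.restrict P2), R (1 - p.2, (1 - p.2) / (1 - p.1)) = R p

/-! Each of the five arguments in the Spence–Abel relation pulls null sets of `(0,1)` back to null
sets of `P₂`, so a bound on `L` bounds `R`. Conversely let the five-term expression be bounded.

* Away from `0` and `1`: for fixed `x` the other four arguments, as functions of `y`, do not
  contract distances by more than the factor `x`. As `{|L| > M}` has small measure for large `M`,
  some `y` makes the other four values at most `M`, which bounds `L x`.
* Near `0`: put `x = 1 - e⁻ˢ` and choose `y` so that the arguments become `1 - e⁻ˢ`, `1 - e⁻ᵗ`,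
  `1 - e⁻⁽ˢ⁺ᵗ⁾` and two more, which stay away from `0` and `1` while `s/t` does. Hence
  `g s = L (1 - e⁻ˢ)` is additive up to a bounded error on such pairs, and
  `3 g(s) ≈ g(t + 3s) - g(t)` carries a bound from one scale to half that scale.
* Near `1`: for `x < 1/2` and `y` close to `1` all arguments but `y` lie in `(0, 3/4)`. -/

open Filter
open scoped NNReal ENNReal

section Measure

lemma hausdorffMeasure_inter_preimage_le {X Y : Type*} [MetricSpace X] [MeasurableSpace X]
    [BorelSpace X] [MetricSpace Y] [MeasurableSpace Y] [BorelSpace Y] {S : Set X} {f : X → Y}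
    {c : ℝ≥0} {d : ℝ} (hd : 0 ≤ d)
    (hf : ∀ y ∈ S, ∀ z ∈ S, dist y z ≤ c * dist (f y) (f z)) (A : Set Y) :
    μH[d] (S ∩ f ⁻¹' A) ≤ (c : ℝ≥0∞) ^ d * μH[d] A := by
  have hanti : AntilipschitzWith c (fun y : S => f y) :=
    AntilipschitzWith.of_le_mul_dist fun y z => hf y y.2 z z.2
  have himage : ((↑) : S → X) '' ((fun y : S => f y) ⁻¹' A) = S ∩ f ⁻¹' A :=
    Subtype.image_preimage_coe S (f ⁻¹' A)
  rw [← himage, isometry_subtype_coe.hausdorffMeasure_image (Or.inl hd)]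
  exact hanti.hausdorffMeasure_preimage_le hd A

lemma volume_inter_preimage_le {S : Set ℝ} {f : ℝ → ℝ} {c : ℝ≥0}
    (hf : ∀ y ∈ S, ∀ z ∈ S, dist y z ≤ c * dist (f y) (f z)) (A : Set ℝ) :
    volume (S ∩ f ⁻¹' A) ≤ c * volume A := by
  simpa only [hausdorffMeasure_real, ENNReal.rpow_one] using
    hausdorffMeasure_inter_preimage_le zero_le_one hf A

lemma tendsto_ae_restrict_of_differentiableOn_leftInvOn {V : Type*} [NormedAddCommGroup V]
    [NormedSpace ℝ V] [FiniteDimensional ℝ V] [MeasurableSpace V] [BorelSpace V] {μ : Measure V}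
    [μ.IsAddHaarMeasure] {S T : Set V} (hS : MeasurableSet S) (hT : MeasurableSet T)
    {f g : V → V} (hg : DifferentiableOn ℝ g T) (hmaps : MapsTo f S T) (hinv : LeftInvOn g f S) :
    Tendsto f (ae (μ.restrict S)) (ae (μ.restrict T)) := by
  intro A hA
  have hnull : μ (T ∩ Aᶜ) = 0 := by
    rwa [mem_ae_iff, Measure.restrict_apply' hT, inter_comm] at hA
  have himage : μ (g '' (T ∩ Aᶜ)) = 0 :=
    addHaar_image_eq_zero_of_differentiableOn_of_addHaar_eq_zero μ
      (hg.mono inter_subset_left) hnull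
  rw [mem_map, mem_ae_iff, Measure.restrict_apply' hS]
  refine measure_mono_null ?_ himage
  rintro p ⟨hpA, hpS⟩
  exact ⟨f p, ⟨hmaps hpS, hpA⟩, hinv hpS⟩

lemma tendsto_ae_restrict_of_mapsTo {α β : Type*} [MeasurableSpace α] [MeasurableSpace β]
    {μ : Measure α} {ν : Measure β} {S : Set α} {T : Set β} {f : α → β}
    (hS : MeasurableSet S) (hT : MeasurableSet T)
    (hf : Tendsto f (ae (μ.restrict S)) (ae ν)) (hmaps : MapsTo f S T) :
    Tendsto f (ae (μ.restrict S)) (ae (ν.restrict T)) := by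
  rw [ae_restrict_eq hT]
  exact tendsto_inf.2 ⟨hf, tendsto_principal.2 ((ae_restrict_mem hS).mono hmaps)⟩

lemma tendsto_ae_restrict_of_forall_section {α β γ : Type*} [MeasurableSpace α]
    [MeasurableSpace β] [MeasurableSpace γ] {μ : Measure α} {ν : Measure β} [SFinite ν]
    {ρ : Measure γ} {S : Set (α × β)} {f : α × β → γ} (hS : MeasurableSet S) (hf : Measurable f)
    (hsection : ∀ᵐ x ∂μ, ∀ A, ρ A = 0 → ν {y | (x, y) ∈ S ∧ f (x, y) ∈ A} = 0) :
    Tendsto f (ae ((μ.prod ν).restrict S)) (ae ρ) := by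
  intro A hA
  obtain ⟨B, hAB, hBmeas, hBnull⟩ := exists_measurable_superset_of_null (mem_ae_iff.1 hA)
  have hnull : (μ.prod ν) (S ∩ f ⁻¹' B) = 0 :=
    Measure.measure_prod_null_of_ae_null (hS.inter (hf hBmeas))
      (hsection.mono fun x hx => hx B hBnull)
  rw [mem_map, mem_ae_iff, Measure.restrict_apply' hS, inter_comm]
  exact measure_mono_null (inter_subset_inter_right S (preimage_mono hAB)) hnull

lemma exists_measure_superlevel_lt {α : Type*} [MeasurableSpace α] {μ : Measure α}
    [IsFiniteMeasure μ] {f : α → ℝ} (hf : AEMeasurable f μ) {ε : ℝ≥0∞} (hε : 0 < ε) :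
    ∃ M : ℝ, μ {x | M < f x} < ε := by
  have htendsto := tendsto_measure_iInter_atTop (μ := μ) (s := fun n : ℕ => {x | (n : ℝ) < f x})
    (fun n => nullMeasurableSet_lt aemeasurable_const hf)
    (fun m n hmn x (hx : (n : ℝ) < f x) => lt_of_le_of_lt (Nat.cast_le.2 hmn) hx)
    ⟨0, measure_ne_top μ _⟩
  have hempty : ⋂ n : ℕ, {x | (n : ℝ) < f x} = ∅ :=
    eq_empty_of_forall_notMem fun x hx =>
      (exists_nat_ge (f x)).elim fun n hn => hn.not_gt (mem_iInter.1 hx n)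
  rw [hempty, measure_empty] at htendsto
  obtain ⟨n, hn⟩ := (htendsto.eventually (gt_mem_nhds hε)).exists
  exact ⟨n, hn⟩

end Measure

section ApproximatelyAdditive

variable {E : Type*} [SeminormedAddCommGroup E] [NormedSpace ℝ E] {g : ℝ → E} {K B a σ : ℝ}

lemma norm_le_of_three_approx_additive {s t : ℝ}
    (h₀ : ‖g s + g t - g (s + t)‖ ≤ K)
    (h₁ : ‖g s + g (t + s) - g (s + (t + s))‖ ≤ K)
    (h₂ : ‖g s + g (t + 2 * s) - g (s + (t + 2 * s))‖ ≤ K)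
    (ht : ‖g t‖ ≤ B) (ht₃ : ‖g (t + 3 * s)‖ ≤ B) : 3 * ‖g s‖ ≤ 3 * K + 2 * B := by
  rw [add_comm s t] at h₀
  rw [show s + (t + s) = t + 2 * s by ring] at h₁
  rw [show s + (t + 2 * s) = t + 3 * s by ring] at h₂
  have htelescope : (3 : ℝ) • g s = (g s + g t - g (t + s)) + (g s + g (t + s) - g (t + 2 * s))
      + (g s + g (t + 2 * s) - g (t + 3 * s)) + g (t + 3 * s) - g t := by module
  calc 3 * ‖g s‖ = ‖(3 : ℝ) • g s‖ := by rw [norm_smul, Real.norm_ofNat]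
    _ ≤ K + K + K + B + B := by
      rw [htelescope]
      exact norm_sub_le_of_le (norm_add_le_of_le (norm_add₃_le.trans (by gcongr)) ht₃) ht
    _ = 3 * K + 2 * B := by ring

lemma ae_norm_le_half_scale
    (hadd : ∀ᵐ s : ℝ, ∀ᵐ t : ℝ, 0 < s → s ≤ t → t ≤ 5 * s → s + t ≤ 6 * a →
      ‖g s + g t - g (s + t)‖ ≤ K)
    (hKB : 3 * K ≤ B) (hσ : 0 < σ) (hσa : σ ≤ a)
    (hbound : ∀ᵐ s : ℝ, s ∈ Icc σ (6 * a) → ‖g s‖ ≤ B) :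
    ∀ᵐ s : ℝ, s ∈ Icc (σ / 2) (6 * a) → ‖g s‖ ≤ B := by
  have htranslate (c : ℝ) : Tendsto (fun t : ℝ => t + c) (ae volume) (ae volume) :=
    (measurePreserving_add_right volume c).quasiMeasurePreserving.tendsto_ae
  filter_upwards [hadd, hbound] with s hadd_s hbound_s hs
  rcases le_or_gt σ s with hσs | hsσ
  · exact hbound_s ⟨hσs, hs.2⟩
  have hs_lower := hs.1
  have hs_pos : 0 < s := by linarith
  have hgood := hadd_s.and (((htranslate s).eventually hadd_s).and
    (((htranslate (2 * s)).eventually hadd_s).and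
      (hbound.and ((htranslate (3 * s)).eventually hbound))))
  obtain ⟨t, ⟨h₀, h₁, h₂, ht, ht₃⟩, hst, hts⟩ :=
    (Measure.dense_of_ae hgood).exists_between (show 2 * s < 3 * s by linarith)
  have := norm_le_of_three_approx_additive
    (h₀ hs_pos (by linarith) (by linarith) (by linarith))
    (h₁ hs_pos (by linarith) (by linarith) (by linarith))
    (h₂ hs_pos (by linarith) (by linarith) (by linarith))
    (ht ⟨by linarith, by linarith⟩) (ht₃ ⟨by linarith, by linarith⟩)
  linarith

lemma ae_norm_le_of_approx_additive (ha : 0 < a)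
    (hadd : ∀ᵐ s : ℝ, ∀ᵐ t : ℝ, 0 < s → s ≤ t → t ≤ 5 * s → s + t ≤ 6 * a →
      ‖g s + g t - g (s + t)‖ ≤ K)
    (hbound : ∀ᵐ s : ℝ, s ∈ Icc a (6 * a) → ‖g s‖ ≤ B) :
    ∀ᵐ s : ℝ, s ∈ Ioc 0 (6 * a) → ‖g s‖ ≤ max B (3 * K) := by
  have hscale (n : ℕ) :
      ∀ᵐ s : ℝ, s ∈ Icc (a * (1 / 2) ^ n) (6 * a) → ‖g s‖ ≤ max B (3 * K) := by
    induction n with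
    | zero =>
      filter_upwards [hbound] with s hs hmem
      exact (hs (by simpa using hmem)).trans (le_max_left _ _)
    | succ n ih =>
      have hle : a * (1 / 2 : ℝ) ^ n ≤ a :=
        mul_le_of_le_one_right ha.le (pow_le_one₀ (by norm_num) (by norm_num))
      have hhalf : a * (1 / 2 : ℝ) ^ (n + 1) = a * (1 / 2) ^ n / 2 := by ring
      rw [hhalf]
      exact ae_norm_le_half_scale hadd (le_max_right _ _) (by positivity) hle ih
  filter_upwards [ae_all_iff.2 hscale] with s hs hmem
  obtain ⟨n, hn⟩ := exists_pow_lt_of_lt_one (div_pos hmem.1 ha) (one_half_lt_one (α := ℝ))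
  exact hs n ⟨((lt_div_iff₀' ha).1 hn).le, hmem.2⟩

end ApproximatelyAdditive

section FiveTerm

/-- The five arguments at which the Spence–Abel relation evaluates `L`, in the order in which they
occur there. -/
noncomputable def fiveTermArg : Fin 5 → ℝ × ℝ → ℝ
  | 0, p => p.1
  | 1, p => p.2
  | 2, p => p.1 / p.2
  | 3, p => (p.2 - 1) / (p.1 - 1)
  | 4, p => p.1 * (p.2 - 1) / (p.2 * (p.1 - 1))

/-- The left-hand side of the Spence–Abel relation for `L`. -/
noncomputable def fiveTerm {E : Type*} [AddGroup E] (L : ℝ → E) (p : ℝ × ℝ) : E :=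
  L p.1 - L p.2 - L (p.1 / p.2) - L ((p.2 - 1) / (p.1 - 1))
    + L (p.1 * (p.2 - 1) / (p.2 * (p.1 - 1)))

lemma isOpen_P2 : IsOpen P2 :=
  (isOpen_lt continuous_const continuous_fst).inter
    ((isOpen_lt continuous_fst continuous_snd).inter (isOpen_lt continuous_snd continuous_const))

lemma measurable_fiveTermArg (i : Fin 5) : Measurable (fiveTermArg i) := by
  fin_cases i <;> unfold fiveTermArg <;> fun_prop

lemma mapsTo_fiveTermArg (i : Fin 5) : MapsTo (fiveTermArg i) P2 (Ioo 0 1) := by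
  rintro ⟨x, y⟩ ⟨hx, hxy, hy⟩
  dsimp only at hx hxy hy
  have hy₀ : 0 < y := hx.trans hxy
  have hx₁ : 0 < 1 - x := by linarith
  have hy₁ : 0 < 1 - y := by linarith
  have harg₃ : (y - 1) / (x - 1) = (1 - y) / (1 - x) := by
    rw [← neg_div_neg_eq, neg_sub, neg_sub]
  have harg₄ : x * (y - 1) / (y * (x - 1)) = x * (1 - y) / (y * (1 - x)) := by
    rw [← neg_div_neg_eq, ← mul_neg, ← mul_neg, neg_sub, neg_sub]
  fin_cases i
  · exact ⟨hx, hxy.trans hy⟩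
  · exact ⟨hy₀, hy⟩
  · exact ⟨div_pos hx hy₀, (div_lt_one hy₀).2 hxy⟩
  · change (y - 1) / (x - 1) ∈ Ioo 0 1
    rw [harg₃]
    exact ⟨div_pos hy₁ hx₁, (div_lt_one hx₁).2 (by linarith)⟩
  · change x * (y - 1) / (y * (x - 1)) ∈ Ioo 0 1
    rw [harg₄]
    exact ⟨by positivity, (div_lt_one (by positivity)).2 (by linarith)⟩

lemma exists_fiveTermArg_succ_sub_eq_mul {x y z : ℝ} (hx : x ∈ Ioo (0 : ℝ) 1)
    (hy : y ∈ Ioo x 1) (hz : z ∈ Ioo x 1) (i : Fin 4) :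
    ∃ κ : ℝ, x ≤ |κ| ∧
      fiveTermArg i.succ (x, y) - fiveTermArg i.succ (x, z) = κ * (y - z) := by
  obtain ⟨hx₀, hx₁⟩ := hx
  have hy₀ : 0 < y := hx₀.trans hy.1
  have hz₀ : 0 < z := hx₀.trans hz.1
  have hx₁' : 0 < 1 - x := by linarith
  have hx₁_ne : x - 1 ≠ 0 := by linarith
  have hyz : y * z ≤ 1 := mul_le_one₀ hy.2.le hz₀.le hz.2.le
  fin_cases i
  · exact ⟨1, by simpa using hx₁.le, (one_mul _).symm⟩
  · refine ⟨-(x / (y * z)), ?_, ?_⟩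
    · rw [abs_neg, abs_of_pos (by positivity)]
      exact le_div_self hx₀.le (by positivity) hyz
    · change x / y - x / z = _
      field_simp
      ring
  · refine ⟨-(1 / (1 - x)), ?_, ?_⟩
    · rw [abs_neg, abs_of_pos (by positivity), le_div_iff₀ hx₁']
      nlinarith
    · change (y - 1) / (x - 1) - (z - 1) / (x - 1) = _
      rw [← neg_sub x 1]
      field_simp
      ring
  · refine ⟨-(x / ((1 - x) * (y * z))), ?_, ?_⟩
    · rw [abs_neg, abs_of_pos (by positivity)]
      exact le_div_self hx₀.le (by positivity) (mul_le_one₀ (by linarith) (by positivity) hyz)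
    · change x * (y - 1) / (y * (x - 1)) - x * (z - 1) / (z * (x - 1)) = _
      rw [← neg_sub x 1]
      field_simp
      ring

lemma volume_inter_preimage_fiveTermArg_succ_le {x : ℝ} (hx : x ∈ Ioo (0 : ℝ) 1) (i : Fin 4)
    (A : Set ℝ) :
    volume (Ioo x 1 ∩ (fun y => fiveTermArg i.succ (x, y)) ⁻¹' A) ≤
      ENNReal.ofReal x⁻¹ * volume A := by
  refine volume_inter_preimage_le (fun y hy z hz => ?_) A
  obtain ⟨κ, hκ, hsub⟩ := exists_fiveTermArg_succ_sub_eq_mul hx hy hz i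
  rw [Real.coe_toNNReal _ (inv_nonneg.2 hx.1.le), Real.dist_eq, Real.dist_eq, hsub, abs_mul,
    le_inv_mul_iff₀ hx.1]
  gcongr

lemma volume_iUnion_preimage_fiveTermArg_succ_lt {x : ℝ} (hx : x ∈ Ioo (0 : ℝ) 1) {A : Set ℝ}
    (hA : volume A < ENNReal.ofReal (x * (1 - x) / 4)) :
    volume (⋃ i : Fin 4, Ioo x 1 ∩ (fun y => fiveTermArg i.succ (x, y)) ⁻¹' A) <
      volume (Ioo x 1) := by
  have hx₀ := hx.1
  calc volume (⋃ i : Fin 4, Ioo x 1 ∩ (fun y => fiveTermArg i.succ (x, y)) ⁻¹' A)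
      ≤ ∑ i : Fin 4, volume (Ioo x 1 ∩ (fun y => fiveTermArg i.succ (x, y)) ⁻¹' A) :=
        measure_iUnion_fintype_le _ _
    _ ≤ ∑ _i : Fin 4, ENNReal.ofReal x⁻¹ * volume A :=
        Finset.sum_le_sum fun i _ => volume_inter_preimage_fiveTermArg_succ_le hx i A
    _ = ENNReal.ofReal (4 * x⁻¹) * volume A := by
        rw [ENNReal.ofReal_mul zero_le_four, ENNReal.ofReal_ofNat, mul_assoc]
        simp
    _ < ENNReal.ofReal (4 * x⁻¹) * ENNReal.ofReal (x * (1 - x) / 4) :=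
        (ENNReal.mul_lt_mul_iff_right (ENNReal.ofReal_pos.2 (by positivity)).ne'
          ENNReal.ofReal_ne_top).2 hA
    _ = volume (Ioo x 1) := by
        rw [← ENNReal.ofReal_mul (by positivity), Real.volume_Ioo]
        congr 1
        field_simp

lemma tendsto_fiveTermArg_ae (i : Fin 5) :
    Tendsto (fiveTermArg i) (ae (volume.restrict P2)) (ae (volume.restrict (Ioo (0 : ℝ) 1))) := by
  refine tendsto_ae_restrict_of_mapsTo isOpen_P2.measurableSet measurableSet_Ioo ?_
    (mapsTo_fiveTermArg i)
  cases i using Fin.cases with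
  | zero =>
    exact Measure.quasiMeasurePreserving_fst.tendsto_ae.mono_left (ae_mono Measure.restrict_le_self)
  | succ i =>
    refine tendsto_ae_restrict_of_forall_section isOpen_P2.measurableSet
      (measurable_fiveTermArg _) (Eventually.of_forall fun x A hA => ?_)
    by_cases hx : x ∈ Ioo (0 : ℝ) 1
    · refine measure_mono_null (t := Ioo x 1 ∩ _ ⁻¹' A) (fun y hy => ⟨hy.1.2, hy.2⟩)
        (le_antisymm ((volume_inter_preimage_fiveTermArg_succ_le hx i A).trans_eq ?_) zero_le)
      rw [hA, mul_zero]
    · refine measure_mono_null (fun y hy => hx ⟨hy.1.1, hy.1.2.1.trans hy.1.2.2⟩) measure_empty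

variable {E : Type*} [SeminormedAddCommGroup E] {L : ℝ → E} {p : ℝ × ℝ} {K B M : ℝ}

lemma norm_fiveTerm_le (hL : ∀ i, ‖L (fiveTermArg i p)‖ ≤ M) : ‖fiveTerm L p‖ ≤ 5 * M :=
  calc ‖fiveTerm L p‖ ≤ M + M + M + M + M :=
        norm_add_le_of_le (norm_sub_le_of_le (norm_sub_le_of_le (norm_sub_le_of_le
          (hL 0) (hL 1)) (hL 2)) (hL 3)) (hL 4)
    _ = 5 * M := by ring

lemma norm_apply_fst_le (hF : ‖fiveTerm L p‖ ≤ K) (hL : ∀ i ≠ 0, ‖L (fiveTermArg i p)‖ ≤ M) :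
    ‖L p.1‖ ≤ K + 4 * M := by
  have hsolve : L p.1 = fiveTerm L p + L (fiveTermArg 1 p) + L (fiveTermArg 2 p)
      + L (fiveTermArg 3 p) - L (fiveTermArg 4 p) := by
    simp only [fiveTerm, fiveTermArg]
    abel
  calc ‖L p.1‖ ≤ K + M + M + M + M := by
        rw [hsolve]
        exact norm_sub_le_of_le (norm_add_le_of_le (norm_add_le_of_le (norm_add_le_of_le hF
          (hL 1 (by decide))) (hL 2 (by decide))) (hL 3 (by decide))) (hL 4 (by decide))
    _ = K + 4 * M := by ring

lemma norm_apply_snd_le (hF : ‖fiveTerm L p‖ ≤ K) (hL : ∀ i ≠ 1, ‖L (fiveTermArg i p)‖ ≤ M) :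
    ‖L p.2‖ ≤ K + 4 * M := by
  have hsolve : L p.2 = -fiveTerm L p + L (fiveTermArg 0 p) - L (fiveTermArg 2 p)
      - L (fiveTermArg 3 p) + L (fiveTermArg 4 p) := by
    simp only [fiveTerm, fiveTermArg]
    abel
  calc ‖L p.2‖ ≤ K + M + M + M + M := by
        rw [hsolve]
        exact norm_add_le_of_le (norm_sub_le_of_le (norm_sub_le_of_le (norm_add_le_of_le
          ((norm_neg _).trans_le hF) (hL 0 (by decide))) (hL 2 (by decide)))
          (hL 3 (by decide))) (hL 4 (by decide))
    _ = K + 4 * M := by ring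

end FiveTerm

section AwayFromEndpoints

variable {E : Type*} [SeminormedAddCommGroup E] {L : ℝ → E} {K : ℝ}

lemma norm_le_of_ae_norm_fiveTerm_le {M x : ℝ} (hx : x ∈ Ioo (0 : ℝ) 1)
    (hF : ∀ᵐ y : ℝ, (x, y) ∈ P2 → ‖fiveTerm L (x, y)‖ ≤ K)
    (hM : volume {u | u ∈ Ioo (0 : ℝ) 1 ∧ M < ‖L u‖} < ENNReal.ofReal (x * (1 - x) / 4)) :
    ‖L x‖ ≤ K + 4 * M := by
  set bad := ⋃ i : Fin 4, Ioo x 1 ∩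
    (fun y => fiveTermArg i.succ (x, y)) ⁻¹' {u | u ∈ Ioo (0 : ℝ) 1 ∧ M < ‖L u‖} with hbad
  have hdiff : volume (Ioo x 1 \ bad) ≠ 0 := fun h =>
    (volume_iUnion_preimage_fiveTermArg_succ_lt hx hM).not_ge (measure_mono_ae (ae_le_set.2 h))
  obtain ⟨y, ⟨hy, hgood⟩, hFy⟩ := ((frequently_ae_mem_iff.2 hdiff).and_eventually hF).exists
  have hP : (x, y) ∈ P2 := ⟨hx.1, hy⟩
  refine norm_apply_fst_le (p := (x, y)) (hFy hP) fun j hj => ?_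
  obtain ⟨i, rfl⟩ := Fin.exists_succ_eq.2 hj
  by_contra! hlt
  exact hgood (hbad ▸ mem_iUnion.2 ⟨i, hy, mapsTo_fiveTermArg _ hP, hlt⟩)

lemma exists_ae_norm_le_Icc (hL : AEStronglyMeasurable L (volume.restrict (Ioo (0 : ℝ) 1)))
    (hF : ∀ᵐ p ∂volume.restrict P2, ‖fiveTerm L p‖ ≤ K) {δ : ℝ} (hδ : 0 < δ) :
    ∃ B : ℝ, ∀ᵐ x : ℝ, x ∈ Icc δ (1 - δ) → ‖L x‖ ≤ B := by
  obtain ⟨M, hM⟩ := exists_measure_superlevel_lt hL.norm.aemeasurable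
    (ENNReal.ofReal_pos.2 (show 0 < δ ^ 2 / 4 by positivity))
  rw [Measure.restrict_apply' measurableSet_Ioo, inter_comm] at hM
  refine ⟨K + 4 * M, ?_⟩
  have hsections := Measure.ae_ae_of_ae_prod ((ae_restrict_iff' isOpen_P2.measurableSet).1 hF)
  filter_upwards [hsections] with x hFx ⟨hδx, hxδ⟩
  refine norm_le_of_ae_norm_fiveTerm_le ⟨by linarith, by linarith⟩ hFx
    (hM.trans_le (ENNReal.ofReal_le_ofReal ?_))
  nlinarith

end AwayFromEndpoints

section ExponentialCoordinate

open Real (exp log)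

/-- The coordinate `s ↦ 1 - e⁻ˢ` from `(0,∞)` onto `(0,1)`; in it the group law
`(1 - x)(1 - y) = 1 - z` becomes addition. -/
noncomputable def expCoord (s : ℝ) : ℝ := 1 - exp (-s)

/-- The parametrization of `P₂` by the open quadrant that turns the arguments `0`, `4` and `2` of
the Spence–Abel relation into `expCoord s`, `expCoord t` and `expCoord (s + t)`. -/
noncomputable def expChart (q : ℝ × ℝ) : ℝ × ℝ :=
  (expCoord q.1, expCoord q.1 / expCoord (q.1 + q.2))

variable {s t x : ℝ}

lemma expCoord_lt_one (s : ℝ) : expCoord s < 1 :=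
  sub_lt_self 1 (Real.exp_pos _)

lemma expCoord_pos (hs : 0 < s) : 0 < expCoord s :=
  sub_pos.2 (Real.exp_lt_one_iff.2 (neg_lt_zero.2 hs))

lemma expCoord_le_self (s : ℝ) : expCoord s ≤ s := by
  unfold expCoord
  linarith [Real.add_one_le_exp (-s)]

lemma half_le_expCoord (hs : 0 ≤ s) (hs' : s ≤ 1 / 2) : s / 2 ≤ expCoord s := by
  have hexp : exp (-s) ≤ (s + 1)⁻¹ := by
    rw [Real.exp_neg]
    exact inv_anti₀ (by linarith) (Real.add_one_le_exp s)
  have hinv : (s + 1)⁻¹ ≤ 1 - s / 2 := by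
    rw [inv_le_iff_one_le_mul₀ (by linarith)]
    nlinarith
  unfold expCoord
  linarith

lemma expCoord_add (s t : ℝ) : expCoord (s + t) = expCoord s + exp (-s) * expCoord t := by
  unfold expCoord
  rw [neg_add, Real.exp_add]
  ring

lemma neg_log_one_sub_expCoord (s : ℝ) : -log (1 - expCoord s) = s := by
  simp [expCoord]

lemma expCoord_neg_log_one_sub (hx : x < 1) : expCoord (-log (1 - x)) = x := by
  rw [expCoord, neg_neg, Real.exp_log (sub_pos.2 hx), sub_sub_cancel]

lemma expCoord_div_expCoord_add_mem_Icc (hs : 0 < s) (ht : 0 < t) (hst : s ≤ 5 * t)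
    (hts : t ≤ 5 * s) (hsum : s + t ≤ 1 / 2) :
    expCoord s / expCoord (s + t) ∈ Icc (1 / 24) (1 - 1 / 24) := by
  have hs_lower := half_le_expCoord hs.le (by linarith)
  have ht_lower := half_le_expCoord ht.le (by linarith)
  have hsum_upper := expCoord_le_self (s + t)
  have hsum_pos : 0 < expCoord (s + t) := expCoord_pos (by linarith)
  have hexp : 1 / 2 ≤ exp (-s) := by linarith [Real.add_one_le_exp (-s)]
  refine ⟨(le_div_iff₀ hsum_pos).2 (by linarith), (div_le_iff₀ hsum_pos).2 ?_⟩
  have hcomplement : 1 / 2 * expCoord t ≤ exp (-s) * expCoord t := by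
    gcongr
    exact (expCoord_pos ht).le
  linarith [expCoord_add s t]

lemma expChart_mem_P2 (hs : 0 < s) (ht : 0 < t) : expChart (s, t) ∈ P2 := by
  have hs_pos := expCoord_pos hs
  have hsum_pos : 0 < expCoord (s + t) := expCoord_pos (by linarith)
  have hgrow : expCoord s < expCoord (s + t) := by
    rw [expCoord_add]
    exact lt_add_of_pos_right _ (mul_pos (Real.exp_pos _) (expCoord_pos ht))
  exact ⟨hs_pos,
    (lt_div_iff₀ hsum_pos).2 (mul_lt_of_lt_one_right hs_pos (expCoord_lt_one _)),
    (div_lt_one hsum_pos).2 hgrow⟩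

lemma fiveTermArg_two_expChart (hs : 0 < s) (t : ℝ) :
    fiveTermArg 2 (expChart (s, t)) = expCoord (s + t) :=
  div_div_cancel₀ (expCoord_pos hs).ne'

lemma fiveTermArg_three_expChart (hs : 0 < s) (ht : 0 < t) :
    fiveTermArg 3 (expChart (s, t)) = expCoord t / expCoord (s + t) := by
  have hsum_ne : expCoord (s + t) ≠ 0 := (expCoord_pos (by linarith)).ne'
  have hexp : expCoord s - 1 = -exp (-s) := by rw [expCoord]; ring
  change (expCoord s / expCoord (s + t) - 1) / (expCoord s - 1) = _
  rw [div_sub_one hsum_ne, hexp]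
  field_simp
  rw [expCoord_add]
  ring

lemma fiveTermArg_four_expChart (hs : 0 < s) (ht : 0 < t) :
    fiveTermArg 4 (expChart (s, t)) = expCoord t := by
  have hsum_ne : expCoord (s + t) ≠ 0 := (expCoord_pos (by linarith)).ne'
  calc fiveTermArg 4 (expChart (s, t))
      = fiveTermArg 2 (expChart (s, t)) * fiveTermArg 3 (expChart (s, t)) :=
        (div_mul_div_comm _ _ _ _).symm
    _ = expCoord (s + t) * (expCoord t / expCoord (s + t)) := by
        rw [fiveTermArg_two_expChart hs t, fiveTermArg_three_expChart hs ht]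
    _ = expCoord t := mul_div_cancel₀ _ hsum_ne

lemma fiveTerm_expChart {E : Type*} [AddCommGroup E] (L : ℝ → E) (hs : 0 < s) (ht : 0 < t) :
    fiveTerm L (expChart (s, t)) =
      L (expCoord s) + L (expCoord t) - L (expCoord (s + t))
        - (L (expCoord s / expCoord (s + t)) + L (expCoord t / expCoord (s + t))) := by
  have hargs : fiveTerm L (expChart (s, t)) =
      L (expCoord s) - L (expCoord s / expCoord (s + t)) - L (fiveTermArg 2 (expChart (s, t)))
        - L (fiveTermArg 3 (expChart (s, t))) + L (fiveTermArg 4 (expChart (s, t))) := rfl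
  rw [hargs, fiveTermArg_two_expChart hs t, fiveTermArg_three_expChart hs ht,
    fiveTermArg_four_expChart hs ht]
  abel

lemma differentiableOn_neg_log_one_sub :
    DifferentiableOn ℝ (fun x => -log (1 - x)) (Ioo 0 1) :=
  ((differentiableOn_const 1).sub differentiableOn_id).log (fun _ hx => (sub_pos.2 hx.2).ne') |>.neg

lemma differentiable_expCoord : Differentiable ℝ expCoord := by
  unfold expCoord
  fun_prop

lemma tendsto_expCoord_ae :
    Tendsto expCoord (ae (volume.restrict (Ioi 0))) (ae (volume.restrict (Ioo 0 1))) :=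
  tendsto_ae_restrict_of_differentiableOn_leftInvOn measurableSet_Ioi measurableSet_Ioo
    differentiableOn_neg_log_one_sub (fun s hs => ⟨expCoord_pos hs, expCoord_lt_one s⟩)
    fun s _ => neg_log_one_sub_expCoord s

lemma tendsto_neg_log_one_sub_ae :
    Tendsto (fun x => -log (1 - x)) (ae (volume.restrict (Ioo 0 1)))
      (ae (volume.restrict (Ioi 0))) :=
  tendsto_ae_restrict_of_differentiableOn_leftInvOn measurableSet_Ioo measurableSet_Ioi
    differentiable_expCoord.differentiableOn
    (fun _ hx => neg_pos.2 (Real.log_neg (by linarith [hx.2]) (by linarith [hx.1])))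
    fun _ hx => expCoord_neg_log_one_sub hx.2

lemma tendsto_expChart_ae :
    Tendsto expChart (ae (volume.restrict (Ioi 0 ×ˢ Ioi 0))) (ae (volume.restrict P2)) := by
  have hlog (i : Fin 5) (hi : DifferentiableOn ℝ (fiveTermArg i) P2) :
      DifferentiableOn ℝ (fun p => -log (1 - fiveTermArg i p)) P2 :=
    differentiableOn_neg_log_one_sub.comp hi (mapsTo_fiveTermArg i)
  have harg₄ : DifferentiableOn ℝ (fiveTermArg 4) P2 := by
    rintro ⟨x, y⟩ ⟨hx, hxy, hy⟩
    dsimp only at hx hxy hy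
    have hdenom : y * (x - 1) ≠ 0 := mul_ne_zero (by linarith) (by linarith)
    change DifferentiableWithinAt ℝ (fun p : ℝ × ℝ => p.1 * (p.2 - 1) / (p.2 * (p.1 - 1))) P2 (x, y)
    fun_prop (disch := exact hdenom)
  refine tendsto_ae_restrict_of_differentiableOn_leftInvOn
    (measurableSet_Ioi.prod measurableSet_Ioi) isOpen_P2.measurableSet
    ((hlog 0 differentiable_fst.differentiableOn).prodMk (hlog 4 harg₄))
    (fun q hq => expChart_mem_P2 hq.1 hq.2) ?_
  rintro ⟨s, t⟩ ⟨hs, ht⟩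
  refine Prod.ext (neg_log_one_sub_expCoord s) ?_
  change -log (1 - fiveTermArg 4 (expChart (s, t))) = t
  rw [fiveTermArg_four_expChart hs ht, neg_log_one_sub_expCoord]

end ExponentialCoordinate

section Endpoints

variable {E : Type*} [SeminormedAddCommGroup E] {L : ℝ → E} {K B : ℝ}

lemma ae_norm_approx_additive_expCoord (hF : ∀ᵐ p ∂volume.restrict P2, ‖fiveTerm L p‖ ≤ K)
    (hB : ∀ᵐ x ∂volume.restrict (Ioo (0 : ℝ) 1), x ∈ Icc (1 / 24) (1 - 1 / 24) → ‖L x‖ ≤ B) :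
    ∀ᵐ s : ℝ, ∀ᵐ t : ℝ, 0 < s → s ≤ t → t ≤ 5 * s → s + t ≤ 1 / 2 →
      ‖L (expCoord s) + L (expCoord t) - L (expCoord (s + t))‖ ≤ K + 2 * B := by
  have hchart := tendsto_expChart_ae.eventually
    (hF.and (((tendsto_fiveTermArg_ae 1).eventually hB).and
      ((tendsto_fiveTermArg_ae 3).eventually hB)))
  have hsections := Measure.ae_ae_of_ae_prod
    ((ae_restrict_iff' (measurableSet_Ioi.prod measurableSet_Ioi)).1 hchart)
  filter_upwards [hsections] with s hs
  filter_upwards [hs] with t hst hs_pos hs_le ht_le hsum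
  have ht_pos : 0 < t := hs_pos.trans_le hs_le
  obtain ⟨hfive, hfirst, hsecond⟩ := hst ⟨hs_pos, ht_pos⟩
  rw [fiveTermArg_three_expChart hs_pos ht_pos] at hsecond
  have hfirst' := hfirst
    (expCoord_div_expCoord_add_mem_Icc hs_pos ht_pos (by linarith) ht_le hsum)
  have hsecond' := hsecond (add_comm t s ▸
    expCoord_div_expCoord_add_mem_Icc ht_pos hs_pos ht_le (by linarith) (by linarith))
  rw [← sub_add_cancel (L (expCoord s) + L (expCoord t) - L (expCoord (s + t)))
    (L (expCoord s / expCoord (s + t)) + L (expCoord t / expCoord (s + t))),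
    ← fiveTerm_expChart L hs_pos ht_pos, two_mul]
  exact norm_add_le_of_le hfive (norm_add_le_of_le hfirst' hsecond')

lemma exists_ae_norm_le_Ioc_zero_quarter [NormedSpace ℝ E]
    (hF : ∀ᵐ p ∂volume.restrict P2, ‖fiveTerm L p‖ ≤ K)
    (hB : ∀ᵐ x ∂volume.restrict (Ioo (0 : ℝ) 1), x ∈ Icc (1 / 24) (1 - 1 / 24) → ‖L x‖ ≤ B) :
    ∃ D : ℝ, ∀ᵐ x ∂volume.restrict (Ioo (0 : ℝ) 1), x ≤ 1 / 4 → ‖L x‖ ≤ D := by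
  have hbase : ∀ᵐ s : ℝ, s ∈ Icc (1 / 12) (6 * (1 / 12)) → ‖L (expCoord s)‖ ≤ B := by
    filter_upwards [(ae_restrict_iff' measurableSet_Ioi).1 (tendsto_expCoord_ae.eventually hB)]
      with s hs ⟨hs_lower, hs_upper⟩
    have hs_pos : 0 < s := by linarith
    refine hs hs_pos ⟨?_, ?_⟩
    · linarith [half_le_expCoord hs_pos.le (by linarith)]
    · linarith [expCoord_le_self s]
  have hadd := ae_norm_approx_additive_expCoord hF hB
  rw [show (1 / 2 : ℝ) = 6 * (1 / 12) by norm_num] at hadd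
  have hexp := ae_norm_le_of_approx_additive (g := fun s => L (expCoord s)) (by norm_num) hadd hbase
  refine ⟨max B (3 * (K + 2 * B)), ?_⟩
  filter_upwards [tendsto_neg_log_one_sub_ae.eventually (ae_restrict_of_ae hexp),
    tendsto_neg_log_one_sub_ae.eventually (ae_restrict_mem measurableSet_Ioi),
    ae_restrict_mem measurableSet_Ioo] with x hx hlog_pos hmem hx_le
  rw [expCoord_neg_log_one_sub hmem.2] at hx
  refine hx ⟨hlog_pos, ?_⟩
  have hinv : (1 - x)⁻¹ ≤ 4 / 3 := by
    rw [inv_le_comm₀ (by linarith) (by norm_num)]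
    linarith
  linarith [Real.one_sub_inv_le_log_of_pos (show 0 < 1 - x by linarith)]

lemma fiveTermArg_lt_three_quarters {x y : ℝ} (hx : x ∈ Ioo (0 : ℝ) (1 / 2))
    (hy : y ∈ Ico (3 / 4 : ℝ) 1) {i : Fin 5} (hi : i ≠ 1) : fiveTermArg i (x, y) < 3 / 4 := by
  obtain ⟨hx₀, hx_lt⟩ := hx
  obtain ⟨hy_ge, hy_lt⟩ := hy
  have hy₀ : 0 < y := by linarith
  have harg₂ : x / y < 3 / 4 := (div_lt_iff₀ hy₀).2 (by linarith)
  have harg₃ : (y - 1) / (x - 1) < 3 / 4 := (div_lt_iff_of_neg (by linarith)).2 (by linarith)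
  fin_cases i
  · exact hx_lt.trans (by norm_num)
  · exact absurd rfl hi
  · exact harg₂
  · exact harg₃
  · change x * (y - 1) / (y * (x - 1)) < 3 / 4
    rw [mul_div_mul_comm]
    have harg₂_pos : 0 < x / y := div_pos hx₀ hy₀
    nlinarith

lemma ae_norm_le_Ico_of_ae_norm_le_Ioo (hF : ∀ᵐ p ∂volume.restrict P2, ‖fiveTerm L p‖ ≤ K)
    (hB : ∀ᵐ x ∂volume.restrict (Ioo (0 : ℝ) 1), x < 3 / 4 → ‖L x‖ ≤ B) :
    ∀ᵐ y : ℝ, y ∈ Ico (3 / 4) 1 → ‖L y‖ ≤ K + 4 * B := by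
  have hargs : ∀ᵐ p ∂volume.restrict P2, ∀ i,
      fiveTermArg i p < 3 / 4 → ‖L (fiveTermArg i p)‖ ≤ B :=
    ae_all_iff.2 fun i => (tendsto_fiveTermArg_ae i).eventually hB
  have hsections : ∀ᵐ y : ℝ, ∀ᵐ x : ℝ, (x, y) ∈ P2 → ‖fiveTerm L (x, y)‖ ≤ K ∧
      ∀ i, fiveTermArg i (x, y) < 3 / 4 → ‖L (fiveTermArg i (x, y))‖ ≤ B :=
    Measure.ae_ae_of_ae_prod
      (Measure.measurePreserving_swap.quasiMeasurePreserving.tendsto_ae.eventually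
        ((ae_restrict_iff' isOpen_P2.measurableSet).1 (hF.and hargs)))
  filter_upwards [hsections] with y hy hmem
  obtain ⟨x, hxy, hx⟩ := (Measure.dense_of_ae hy).exists_between (one_half_pos (α := ℝ))
  obtain ⟨hfive, hbound⟩ := hxy ⟨hx.1, hx.2.trans (by linarith [hmem.1]), hmem.2⟩
  exact norm_apply_snd_le hfive fun i hi => hbound i (fiveTermArg_lt_three_quarters hx hmem hi)

end Endpoints

section Boundedness

variable {E : Type*} [SeminormedAddCommGroup E] {L : ℝ → E}

lemma ae_norm_fiveTerm_le {M : ℝ} (hL : ∀ᵐ x ∂volume.restrict (Ioo (0 : ℝ) 1), ‖L x‖ ≤ M) :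
    ∀ᵐ p ∂volume.restrict P2, ‖fiveTerm L p‖ ≤ 5 * M := by
  have hargs : ∀ᵐ p ∂volume.restrict P2, ∀ i, ‖L (fiveTermArg i p)‖ ≤ M :=
    ae_all_iff.2 fun i => (tendsto_fiveTermArg_ae i).eventually hL
  exact hargs.mono fun p hp => norm_fiveTerm_le hp

lemma exists_ae_norm_le_of_ae_norm_fiveTerm_le [NormedSpace ℝ E] {K : ℝ}
    (hL : AEStronglyMeasurable L (volume.restrict (Ioo (0 : ℝ) 1)))
    (hF : ∀ᵐ p ∂volume.restrict P2, ‖fiveTerm L p‖ ≤ K) :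
    ∃ M : ℝ, ∀ᵐ x ∂volume.restrict (Ioo (0 : ℝ) 1), ‖L x‖ ≤ M := by
  obtain ⟨B, hB⟩ := exists_ae_norm_le_Icc hL hF (δ := 1 / 24) (by norm_num)
  have hmiddle := ae_restrict_of_ae (s := Ioo (0 : ℝ) 1) hB
  obtain ⟨D, hD⟩ := exists_ae_norm_le_Ioc_zero_quarter hF hmiddle
  have hleft : ∀ᵐ x ∂volume.restrict (Ioo (0 : ℝ) 1), x < 3 / 4 → ‖L x‖ ≤ max D B := by
    filter_upwards [hmiddle, hD] with x hBx hDx hx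
    rcases le_or_gt x (1 / 4) with hx_le | hx_gt
    · exact (hDx hx_le).trans (le_max_left _ _)
    · exact (hBx ⟨by linarith, by linarith⟩).trans (le_max_right _ _)
  refine ⟨max (max D B) (K + 4 * max D B), ?_⟩
  filter_upwards [hleft, ae_restrict_of_ae (ae_norm_le_Ico_of_ae_norm_le_Ioo hF hleft),
    ae_restrict_mem measurableSet_Ioo] with x hx_left hx_right hmem
  rcases lt_or_ge x (3 / 4) with hx_lt | hx_ge
  · exact (hx_left hx_lt).trans (le_max_left _ _)
  · exact (hx_right ⟨hx_ge, hmem.2⟩).trans (le_max_right _ _)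

theorem perturbed_spence_abel_boundedness_general [NormedSpace ℝ E] {R : ℝ × ℝ → E}
    (hL : AEStronglyMeasurable L (volume.restrict (Ioo (0 : ℝ) 1)))
    (hR : fiveTerm L =ᵐ[volume.restrict P2] R) :
    (∃ M : ℝ, ∀ᵐ x ∂volume.restrict (Ioo (0 : ℝ) 1), ‖L x‖ ≤ M) ↔
      ∃ M : ℝ, ∀ᵐ p ∂volume.restrict P2, ‖R p‖ ≤ M := by
  constructor
  · rintro ⟨M, hM⟩
    refine ⟨5 * M, ?_⟩
    filter_upwards [ae_norm_fiveTerm_le hM, hR] with p hp hRp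
    rwa [← hRp]
  · rintro ⟨K, hK⟩
    refine exists_ae_norm_le_of_ae_norm_fiveTerm_le hL (K := K) ?_
    filter_upwards [hK, hR] with p hp hRp
    rwa [hRp]

end Boundedness

/-- **Boundedness** for the perturbed Spence–Abel system: the solution `L` is essentially
bounded on `(0,1)` if and only if `R` is essentially bounded on `P₂`. -/
theorem perturbed_spence_abel_boundedness (R : ℝ × ℝ → ℝ)
    (hR : AEMeasurable R (volume.restrict P2)) (h6 : SixTermAE R) (hsym : SymmAE R)
    (C : ℝ) (L : ℝ → ℝ)
    (hL : AEMeasurable L (volume.restrict (Set.Ioo (0:ℝ) 1)))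
    (hsol : SolvesAE R C L) :
    (∃ M : ℝ, ∀ᵐ x ∂(volume.restrict (Set.Ioo (0:ℝ) 1)), |L x| ≤ M) ↔
      (∃ M : ℝ, ∀ᵐ p ∂(volume.restrict P2), |R p| ≤ M) :=
  perturbed_spence_abel_boundedness_general hL.aestronglyMeasurable hsol.1
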